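/- arXiv:2408.16858 — 9 statements merged into one kernel-verified Lean document; each statement's English description precedes it below -/
import Mathlib

section
/- Let n, k, N be positive integers and let η_1, …, η_N be an orthonormal family of vectors in ℂⁿ⊗ℂᵏ (i.e. in EuclideanSpace ℂ (Fin n × Fin k)) such that for all p ≠ q the rank-one operator |η_p⟩⟨η_q| lies in S^⊥, i.e. for all i, j : Fin n, ∑_{a : Fin k} η_p (i,a) · conj(η_q (j,a)) = 0. Then N ≤ k. -/
/-- an orthonormal family in `ℂⁿ ⊗ ℂᵏ` whose distinct members give
rank-one operators in `S^⊥` has at most `k` elements. -/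
theorem card_orthonormal_family_le (n k N : ℕ) (hn : 0 < n) (hk : 0 < k) (hN : 0 < N)
    (η : Fin N → EuclideanSpace ℂ (Fin n × Fin k))
    (honb : Orthonormal ℂ η)
    (horth : ∀ p q : Fin N, p ≠ q → ∀ i j : Fin n,
      ∑ a : Fin k, η p (i, a) * (starRingEnd ℂ) (η q (j, a)) = 0) :
    N ≤ k := by
  -- Each `η p` is nonzero, so it has a nonzero row `η p (r p, ·)` in `ℂᵏ`; by `horth` these rows
  -- are pairwise orthogonal, whichever row index is picked for each `p`.
  have hrow : ∀ p, ∃ i a, η p (i, a) ≠ 0 := by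
    intro p
    by_contra! h
    exact honb.ne_zero p (by ext ⟨i, a⟩; simpa using h i a)
  choose r c hrc using hrow
  let v : Fin N → EuclideanSpace ℂ (Fin k) := fun p => WithLp.toLp 2 fun a => η p (r p, a)
  have hv0 : ∀ p, v p ≠ 0 := fun p h => hrc p (by simpa [v] using congrArg (fun x => x (c p)) h)
  have hv : LinearIndependent ℂ v := by
    refine linearIndependent_of_ne_zero_of_inner_eq_zero hv0 fun p q hpq => ?_
    simpa [v, PiLp.inner_apply] using horth q p hpq.symm (r q) (r p)
  simpa using hv.fintype_card_le_finrank
end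

section
/- Let n, k be positive integers. Then α(S) = k, where α(S) is the supremum (in ℕ) of the set of N for which there exists an orthonormal family η_1, …, η_N in EuclideanSpace ℂ (Fin n × Fin k) satisfying ∑_{a : Fin k} η_p (i,a) · conj(η_q (j,a)) = 0 for all i, j : Fin n and all p ≠ q. -/
/-!
Viewing a vector of `ℂⁿ ⊗ ℂᵏ` as an `n × k` matrix, the hypothesis says that every row of `η p` is
orthogonal in `ℂᵏ` to every row of `η q` when `p ≠ q`. Each `η p` is a unit vector, so it has a
nonzero row; choosing one for every `p` gives `N` nonzero pairwise orthogonal vectors in `ℂᵏ`,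
whence `N ≤ k`. The bound is attained by the vectors `e₀ ⊗ e_p`, `p < k`.
-/

/-- the independence number of the confusability graph of the
partial trace channel equals `k`. -/
theorem independence_number_eq_k (n k : ℕ) (hn : 0 < n) (hk : 0 < k) :
    sSup {N : ℕ | ∃ η : Fin N → EuclideanSpace ℂ (Fin n × Fin k),
      Orthonormal ℂ η ∧
      ∀ p q : Fin N, p ≠ q → ∀ i j : Fin n,
        ∑ a : Fin k, η p (i, a) * (starRingEnd ℂ) (η q (j, a)) = 0} = k := by
  refine IsGreatest.csSup_eq ⟨?_, ?_⟩
  · refine ⟨fun p => EuclideanSpace.single ((⟨0, hn⟩ : Fin n), p) (1 : ℂ), ?_, ?_⟩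
    · rw [orthonormal_iff_ite]
      intro p q
      simp [EuclideanSpace.inner_single_left]
    · intro p q hpq i j
      refine Finset.sum_eq_zero fun a _ => ?_
      -- The first factor vanishes unless `a = p`, the second unless `a = q`.
      by_cases h : a = p
      · have h' : a ≠ q := fun h' => hpq (h.symm.trans h')
        simp [h']
      · simp [h]
  · rintro N ⟨η, hη, horth⟩
    have hrow : ∀ p, ∃ i, (WithLp.toLp 2 fun a => η p (i, a) : EuclideanSpace ℂ (Fin k)) ≠ 0 := by
      intro p
      by_contra! h
      refine hη.ne_zero p ?_
      ext ⟨i, a⟩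
      simpa using congrArg (fun v : EuclideanSpace ℂ (Fin k) => v a) (h i)
    choose r hr using hrow
    have hli := linearIndependent_of_ne_zero_of_inner_eq_zero (𝕜 := ℂ) hr (by
      intro p q hpq
      -- Mathlib's inner product is conjugate-linear in its first argument, hence `q` before `p`.
      simpa [PiLp.inner_apply] using horth q p hpq.symm (r q) (r p))
    simpa using hli.fintype_card_le_finrank
end

section
/- Let n, k be positive integers and for each positive integer m let α_m denote the supremum (in ℕ) of the set of N for which there exists an orthonormal family η_1, …, η_N in EuclideanSpace ℂ (Fin (n^m) × Fin (k^m)) satisfying ∑_{a : Fin (k^m)} η_p (i,a) · conj(η_q (j,a)) = 0 for all i, j : Fin (n^m) and all p ≠ q. Then the sequence m ↦ (1/m)·Real.log(α_m) tends to Real.log k as m → ∞; that is, the zero-error capacity C₀(S) of the confusability graph of the partial trace channel equals log k. -/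
/-!
The independence number of `B(ℂⁿ) ⊗ 𝟙ₖ` is exactly `k` as soon as `n > 0`, so the sequence in the
theorem is constantly `log k` for `m ≥ 1`.

Regard `η_p` as an `n × k` matrix. The condition says that every row of `η_p` is orthogonal in `ℂᵏ`
to every row of `η_q`. Picking a nonzero row of each `η_p` gives `N` nonzero pairwise orthogonal
vectors of `ℂᵏ`, hence `N ≤ k` (`le_of_independent`). Conversely, the matrix units with their entry
in a fixed row form an independent family of size `k` (`exists_independent`).
-/

open Filter

/-- The independence number of `B(ℂⁿ) ⊗ 𝟙ₖ ⊆ B(ℂⁿ ⊗ ℂᵏ)`. -/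
noncomputable def indepNum (n k : ℕ) : ℕ :=
  sSup {N : ℕ | ∃ η : Fin N → EuclideanSpace ℂ (Fin n × Fin k),
    Orthonormal ℂ η ∧
    ∀ p q : Fin N, p ≠ q → ∀ i j : Fin n,
      ∑ a : Fin k, η p (i, a) * (starRingEnd ℂ) (η q (j, a)) = 0}

theorem le_of_independent {n k N : ℕ} (η : Fin N → EuclideanSpace ℂ (Fin n × Fin k))
    (hη : Orthonormal ℂ η)
    (h : ∀ p q : Fin N, p ≠ q → ∀ i j : Fin n,
      ∑ a : Fin k, η p (i, a) * (starRingEnd ℂ) (η q (j, a)) = 0) : N ≤ k := by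
  have hne : ∀ p, ∃ i : Fin n, ∃ a : Fin k, η p (i, a) ≠ 0 := by
    intro p
    by_contra! hp
    refine hη.ne_zero p ?_
    ext ⟨i, a⟩
    exact hp i a
  choose i a hia using hne
  let v : Fin N → EuclideanSpace ℂ (Fin k) := fun p => WithLp.toLp 2 fun b => η p (i p, b)
  have hv0 : ∀ p, v p ≠ 0 := fun p hp =>
    hia p (congrArg (fun w : EuclideanSpace ℂ (Fin k) => w (a p)) hp)
  have hv : Pairwise fun p q => inner ℂ (v p) (v q) = 0 := by
    intro p q hpq
    simpa [v, PiLp.inner_apply] using h q p hpq.symm (i q) (i p)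
  simpa using (linearIndependent_of_ne_zero_of_inner_eq_zero hv0 hv).fintype_card_le_finrank

theorem exists_independent {n : ℕ} (hn : 0 < n) (k : ℕ) :
    ∃ η : Fin k → EuclideanSpace ℂ (Fin n × Fin k),
      Orthonormal ℂ η ∧
      ∀ p q : Fin k, p ≠ q → ∀ i j : Fin n,
        ∑ a : Fin k, η p (i, a) * (starRingEnd ℂ) (η q (j, a)) = 0 := by
  refine ⟨fun p => EuclideanSpace.single (⟨0, hn⟩, p) 1, ?_, ?_⟩
  · exact (EuclideanSpace.orthonormal_single (𝕜 := ℂ) (ι := Fin n × Fin k)).comp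
      (fun p => (⟨0, hn⟩, p)) (fun p q hpq => (Prod.ext_iff.1 hpq).2)
  · intro p q hpq i j
    refine Finset.sum_eq_zero fun a _ => ?_
    by_cases hap : a = p
    · have haq : a ≠ q := fun haq => hpq (hap.symm.trans haq)
      simp [haq]
    · simp [hap]

theorem indepNum_eq {n : ℕ} (hn : 0 < n) (k : ℕ) : indepNum n k = k :=
  IsGreatest.csSup_eq ⟨exists_independent hn k, fun _ ⟨η, hη, h⟩ => le_of_independent η hη h⟩

/-- the zero-error capacity of the confusability graph of the
partial trace channel equals `log k`. -/
theorem zero_error_capacity_eq_log_k (n k : ℕ) (hn : 0 < n) (hk : 0 < k) :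
    Tendsto (fun m : ℕ => (1 / (m : ℝ)) * Real.log (indepNum (n ^ m) (k ^ m)))
      atTop (nhds (Real.log k)) := by
  refine tendsto_const_nhds.congr' ?_
  filter_upwards [eventually_gt_atTop 0] with m hm
  have hm' : (m : ℝ) ≠ 0 := by positivity
  rw [indepNum_eq (pow_pos hn m), Nat.cast_pow, Real.log_pow]
  field_simp
end

section
/- Let n, k be positive integers and let X be a positive semidefinite complex matrix indexed by (Fin n × Fin k) × (Fin n × Fin k). Then ‖X‖ ≤ k · ‖(Tr_n⊗id_k)(X)‖, where (Tr_n⊗id_k)(X) is the k×k matrix with (a,b) entry ∑_{i : Fin n} X (i,a) (i,b) and ‖·‖ denotes the ℓ²→ℓ² operator norm. -/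
/-!
The operator norm of a positive semidefinite matrix is its largest eigenvalue, hence at most its
trace, the sum of all its (nonnegative) eigenvalues. The partial trace preserves the trace, and the
trace of a `k × k` matrix is at most `k` times its operator norm because each diagonal entry is
bounded by the operator norm. Chaining these gives `‖X‖ ≤ tr X = tr (Tr_n ⊗ id_k)(X) ≤ k ‖(Tr_n ⊗
id_k)(X)‖`.
-/

open Matrix
open scoped ComplexOrder

/-- The ℓ²→ℓ² operator norm of a matrix. -/
noncomputable def l2OpNorm {ι : Type*} [Fintype ι] [DecidableEq ι]
    (X : Matrix ι ι ℂ) : ℝ :=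
  ‖Matrix.toEuclideanCLM (𝕜 := ℂ) X‖

theorem norm_entry_le_l2OpNorm {ι : Type*} [Fintype ι] [DecidableEq ι]
    (T : Matrix ι ι ℂ) (a b : ι) : ‖T a b‖ ≤ l2OpNorm T := by
  have h := (Matrix.toEuclideanCLM (𝕜 := ℂ) T).le_opNorm (EuclideanSpace.single b 1)
  rw [PiLp.norm_single, norm_one, mul_one] at h
  refine le_trans ?_ h
  have h2 := PiLp.norm_apply_le
    (Matrix.toEuclideanCLM (𝕜 := ℂ) T (EuclideanSpace.single b 1)) a
  simpa [Matrix.ofLp_toEuclideanCLM] using h2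

open scoped Matrix.Norms.L2Operator in
/-- The norm is the largest eigenvalue, and the eigenvalues are nonnegative with sum `tr X`. -/
theorem l2OpNorm_le_trace {ι : Type*} [Fintype ι] [DecidableEq ι]
    (X : Matrix ι ι ℂ) (hX : X.PosSemidef) : l2OpNorm X ≤ ‖X.trace‖ := by
  have hnn := hX.eigenvalues_nonneg
  have h1 : l2OpNorm X = ‖hX.1.eigenvalues‖ := by
    change ‖X‖ = _
    conv_lhs => rw [hX.1.spectral_theorem]
    -- conjugation by a unitary does not change the operator norm
    rw [Unitary.conjStarAlgAut_apply, ← Unitary.coe_star, CStarRing.norm_mul_coe_unitary,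
      CStarRing.norm_coe_unitary_mul, Matrix.l2_opNorm_diagonal]
    simp [Pi.norm_def]
  have h2 : ‖X.trace‖ = ∑ i, hX.1.eigenvalues i := by
    rw [hX.1.trace_eq_sum_eigenvalues]
    have := Finset.sum_nonneg fun i (_ : i ∈ Finset.univ) => hnn i
    rw [← RCLike.ofReal_sum, RCLike.norm_ofReal, abs_of_nonneg this]
  rw [h1, h2]
  refine (pi_norm_le_iff_of_nonneg (Finset.sum_nonneg fun i _ => hnn i)).2 fun i => ?_
  rw [Real.norm_of_nonneg (hnn i)]
  exact Finset.single_le_sum (fun j _ => hnn j) (Finset.mem_univ i)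

/-- for positive semidefinite `X`, `‖X‖ ≤ k ‖(Tr_n ⊗ id_k)(X)‖`. -/
theorem norm_le_k_mul_norm_partialTrace (n k : ℕ) (hn : 0 < n) (hk : 0 < k)
    (X : Matrix (Fin n × Fin k) (Fin n × Fin k) ℂ) (hX : X.PosSemidef) :
    l2OpNorm X ≤ k *
      l2OpNorm (Matrix.of fun a b : Fin k => ∑ i : Fin n, X (i, a) (i, b)) := by
  set T : Matrix (Fin k) (Fin k) ℂ :=
    Matrix.of fun a b : Fin k => ∑ i : Fin n, X (i, a) (i, b) with hT
  have htr : X.trace = ∑ a, T a a := by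
    simp only [Matrix.trace, Matrix.diag, hT, Matrix.of_apply]
    rw [Fintype.sum_prod_type, Finset.sum_comm]
  calc l2OpNorm X ≤ ‖X.trace‖ := l2OpNorm_le_trace X hX
    _ ≤ ∑ a, ‖T a a‖ := htr ▸ norm_sum_le _ _
    _ ≤ ∑ _a : Fin k, l2OpNorm T := Finset.sum_le_sum fun a _ => norm_entry_le_l2OpNorm T a a
    _ = k * l2OpNorm T := by simp
end

section
/- Let n, k be positive integers and let X be a positive semidefinite complex matrix indexed by (Fin n × Fin k) × (Fin n × Fin k). Then ‖(id_n⊗T_k)(X)‖ ≤ ‖(Tr_n⊗id_k)(X)‖, where (id_n⊗T_k)(X) is the partial transpose of X, i.e. the matrix with ((i,a),(j,b)) entry X (i,b) (j,a), (Tr_n⊗id_k)(X) is the k×k matrix with (a,b) entry ∑_{i : Fin n} X (i,a) (i,b), and ‖·‖ denotes the ℓ²→ℓ² operator norm. -/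
/-!
Write `X = Bᴴ B` and, for each row `m` of `B`, regard that row as an `n × k` matrix `B m`.
For `x, y` in `ℂⁿ ⊗ ℂᵏ`, the sesquilinear form of the partial transpose `Y` is
`⟪Y x, y⟫ = ∑ m i j, h m i j x * conj (h m j i y)`, where
`h m i j x = ∑ b, B m (i, b) * conj (x (j, b))`: transposing the second tensor factor moves the
contraction over `a` onto the pair `B, y` and the contraction over `b` onto the pair `B, x`.
Stacking the `B m` vertically gives a matrix `C` with rows indexed by `(m, i)`, and
`Cᴴ C` is exactly the partial trace `P` of `X`. By the C⋆-identity `‖C‖² = ‖P‖`, hence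
`∑ m i j, ‖h m i j x‖² ≤ ‖P‖ ‖x‖²` (apply `C` to the conjugate of each slice `x (j, ·)`).
The arithmetic-geometric mean inequality on unit vectors `x, y` then bounds `⟪Y x, y⟫` by `‖P‖`.
-/

open Matrix
open scoped ComplexOrder

open scoped Matrix.Norms.L2Operator in
/-- The C⋆-identity in coordinates: `‖C v‖² ≤ ‖Cᴴ C‖ ‖v‖²`. -/
theorem sum_norm_sq_mulVec_le {ι κ : Type*} [Fintype ι] [Fintype κ] [DecidableEq κ]
    (C : Matrix ι κ ℂ) (v : κ → ℂ) :
    ∑ p, ‖∑ b, C p b * v b‖ ^ 2 ≤ l2OpNorm (Cᴴ * C) * ∑ b, ‖v b‖ ^ 2 := by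
  have h1 := Matrix.l2_opNorm_mulVec C (WithLp.toLp 2 v)
  have h2 : l2OpNorm (Cᴴ * C) = ‖C‖ * ‖C‖ := Matrix.l2_opNorm_conjTranspose_mul_self C
  have h3 := pow_le_pow_left₀ (norm_nonneg _) h1 2
  rw [mul_pow, EuclideanSpace.norm_sq_eq, EuclideanSpace.norm_sq_eq] at h3
  rw [h2, ← sq]
  exact h3

theorem exists_eq_conjTranspose_mul_self {ι : Type*} [Fintype ι] [DecidableEq ι]
    {X : Matrix ι ι ℂ} (hX : X.PosSemidef) : ∃ B : Matrix ι ι ℂ, X = Bᴴ * B := by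
  open scoped MatrixOrder Matrix.Norms.L2Operator in
  exact CStarAlgebra.nonneg_iff_eq_star_mul_self.mp hX.nonneg

/-- The sum over `m, i, j` of the squared contractions of the row-matrices `B m` with the
conjugated slices of `x` is controlled by the partial trace of `Bᴴ * B`. -/
theorem sum_norm_sq_contraction_le {μ ν κ : Type*} [Fintype μ] [Fintype ν] [Fintype κ]
    [DecidableEq κ] (B : Matrix μ (ν × κ) ℂ) (x : ν × κ → ℂ) :
    ∑ m, ∑ i, ∑ j, ‖∑ b, B m (i, b) * star (x (j, b))‖ ^ 2 ≤
      l2OpNorm (Matrix.of fun a b : κ => ∑ i : ν, (Bᴴ * B) (i, a) (i, b)) *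
        ∑ p, ‖x p‖ ^ 2 := by
  let C : Matrix (μ × ν) κ ℂ := Matrix.of fun p b => B p.1 (p.2, b)
  have hC : (Matrix.of fun a b : κ => ∑ i : ν, (Bᴴ * B) (i, a) (i, b)) = Cᴴ * C := by
    ext a b
    simp only [Matrix.of_apply, Matrix.mul_apply, Matrix.conjTranspose_apply,
      Fintype.sum_prod_type, C]
    exact Finset.sum_comm
  rw [hC, Fintype.sum_prod_type, Finset.mul_sum]
  calc ∑ m, ∑ i, ∑ j, ‖∑ b, B m (i, b) * star (x (j, b))‖ ^ 2
      = ∑ j, ∑ p : μ × ν, ‖∑ b, C p b * star (x (j, b))‖ ^ 2 := by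
        exact (Fintype.sum_prod_type' fun m i =>
          ∑ j, ‖∑ b, B m (i, b) * star (x (j, b))‖ ^ 2).symm.trans Finset.sum_comm
    _ ≤ ∑ j, l2OpNorm (Cᴴ * C) * ∑ b, ‖x (j, b)‖ ^ 2 := by
        refine Finset.sum_le_sum fun j _ => ?_
        simpa only [norm_star] using sum_norm_sq_mulVec_le C fun b => star (x (j, b))

/-- The sesquilinear form of the partial transpose of `Bᴴ B`: the two contractions over the
second tensor factor decouple. -/
theorem inner_partialTranspose {μ ν κ : Type*} [Fintype μ] [Fintype ν] [Fintype κ]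
    [DecidableEq ν] [DecidableEq κ] (B : Matrix μ (ν × κ) ℂ)
    (x y : EuclideanSpace ℂ (ν × κ)) :
    inner ℂ (Matrix.toEuclideanCLM (𝕜 := ℂ)
      (Matrix.of fun p q : ν × κ => (Bᴴ * B) (p.1, q.2) (q.1, p.2)) x) y =
    ∑ m, ∑ i, ∑ j, (∑ b, B m (i, b) * star (x (j, b))) *
      star (∑ a, B m (j, a) * star (y (i, a))) := by
  rw [EuclideanSpace.inner_eq_star_dotProduct, Matrix.ofLp_toEuclideanCLM]
  simp only [dotProduct, mulVec, Pi.star_apply, Matrix.of_apply, Matrix.mul_apply,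
    Matrix.conjTranspose_apply, Fintype.sum_prod_type, star_sum, star_mul', star_star,
    Finset.sum_mul, Finset.mul_sum]
  -- Both sides are sums over `m, i, j, a, b`; only the order of summation differs.
  refine Eq.trans (Finset.sum_congr rfl fun i _ => ?_) Finset.sum_comm
  refine Finset.sum_comm.trans <| Eq.trans (Finset.sum_congr rfl fun j _ => ?_) Finset.sum_comm
  refine Eq.trans (Finset.sum_congr rfl fun a _ => ?_) Finset.sum_comm
  refine Eq.trans (Finset.sum_congr rfl fun b _ => ?_) Finset.sum_comm
  exact Finset.sum_congr rfl fun m _ => by ring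

/-- for positive semidefinite `X`, the norm of the partial transpose
is bounded by the norm of the partial trace `(Tr_n ⊗ id_k)(X)`. -/
theorem norm_partialTranspose_le_norm_partialTrace (n k : ℕ) (hn : 0 < n) (hk : 0 < k)
    (X : Matrix (Fin n × Fin k) (Fin n × Fin k) ℂ) (hX : X.PosSemidef) :
    l2OpNorm (Matrix.of fun p q : Fin n × Fin k => X (p.1, q.2) (q.1, p.2)) ≤
      l2OpNorm (Matrix.of fun a b : Fin k => ∑ i : Fin n, X (i, a) (i, b)) := by
  obtain ⟨B, rfl⟩ := exists_eq_conjTranspose_mul_self hX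
  refine ContinuousLinearMap.opNorm_le_of_re_inner_le (norm_nonneg _) fun x y hx hy => ?_
  rw [inner_partialTranspose]
  have hbx := sum_norm_sq_contraction_le B x
  have hby := sum_norm_sq_contraction_le B y
  rw [← EuclideanSpace.norm_sq_eq, hx, one_pow, mul_one] at hbx
  rw [← EuclideanSpace.norm_sq_eq, hy, one_pow, mul_one] at hby
  -- In the `y`-factor of the inner product the roles of `i` and `j` are exchanged.
  have hswap : ∑ m, ∑ i, ∑ j, ‖∑ a, B m (j, a) * star (y (i, a))‖ ^ 2 =
      ∑ m, ∑ i, ∑ j, ‖∑ a, B m (i, a) * star (y (j, a))‖ ^ 2 :=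
    Finset.sum_congr rfl fun m _ => Finset.sum_comm
  rw [← hswap] at hby
  have hamgm : ‖∑ m, ∑ i, ∑ j, (∑ b, B m (i, b) * star (x (j, b))) *
      star (∑ a, B m (j, a) * star (y (i, a)))‖ ≤
      ∑ m, ∑ i, ∑ j, (‖∑ b, B m (i, b) * star (x (j, b))‖ ^ 2 +
        ‖∑ a, B m (j, a) * star (y (i, a))‖ ^ 2) / 2 := by
    refine norm_sum_le_of_le _ fun m _ => norm_sum_le_of_le _ fun i _ =>
      norm_sum_le_of_le _ fun j _ => ?_
    rw [norm_mul, norm_star]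
    linarith [two_mul_le_add_sq ‖∑ b, B m (i, b) * star (x (j, b))‖
      ‖∑ a, B m (j, a) * star (y (i, a))‖]
  refine (RCLike.re_le_norm _).trans (hamgm.trans ?_)
  simp only [← Finset.sum_div, Finset.sum_add_distrib]
  linarith
end

section
/- Let n, k be positive integers with n ≥ k. Then there exists a positive semidefinite complex matrix Y indexed by (Fin n × Fin k) × (Fin n × Fin k) such that for all i, j : Fin n, ∑_{a : Fin k} Y (i,a) (j,a) = if i = j then k else 0, and ‖Y‖ = k², where ‖·‖ is the ℓ²→ℓ² operator norm. -/
/-!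
Let `v = ∑ₐ eₐ ⊗ eₐ` (sum over `a < k`, possible because `k ≤ n`) and let `D` be the projection onto
the span of the `eᵢ ⊗ eₐ` with `k ≤ i`. Take `Y = k • v v* + D`. The first summand has partial trace
`k` times the projection onto the first `k` basis vectors of `ℂⁿ`, and `D` has partial trace `k`
times the complementary projection, so `Y` has partial trace `k • 𝟙`.

Since `v* v = k` and `D v = 0`, the vector `v` is an eigenvector of `Y` for the eigenvalue `k²`,
whence `‖Y‖ ≥ k²`. For the upper bound put `B = k⁻¹ • v v*`, which is a projection orthogonal to `D`,
so that `Y = (k² (1 - D) + D) (B + D)`. The first factor is diagonal with entries in `{1, k²}`, the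
second is a projection (`IsStarProjection.norm_le`).
-/

open Matrix
open scoped ComplexOrder

open scoped Matrix.Norms.L2Operator in
lemma l2OpNorm_eq_norm {ι : Type*} [Fintype ι] [DecidableEq ι] (X : Matrix ι ι ℂ) :
    l2OpNorm X = ‖X‖ := rfl

/-- The unnormalised maximally entangled vector `∑ₐ eₐ ⊗ eₐ`. -/
def entVec (n k : ℕ) : Fin n × Fin k → ℂ :=
  fun p => if p.1.val = p.2.val then 1 else 0

/-- The diagonal of the projection onto the span of the `eᵢ ⊗ eₐ` with `k ≤ i`. -/
def tailDiag (n k : ℕ) : Fin n × Fin k → ℂ :=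
  fun p => if k ≤ p.1.val then 1 else 0

/-- The rank-one matrix `v v*` for the vector `v = entVec n k`. -/
def entMat (n k : ℕ) : Matrix (Fin n × Fin k) (Fin n × Fin k) ℂ :=
  vecMulVec (entVec n k) (star (entVec n k))

/-- The extremal matrix `k • v v* + D`. -/
def extremalY (n k : ℕ) : Matrix (Fin n × Fin k) (Fin n × Fin k) ℂ :=
  (k : ℂ) • entMat n k + diagonal (tailDiag n k)

lemma tailDiag_mul_entVec (n k : ℕ) (p : Fin n × Fin k) :
    tailDiag n k p * entVec n k p = 0 := by
  have := p.2.isLt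
  unfold tailDiag entVec
  split_ifs <;> first | omega | simp

lemma tailDiag_mul_self (n k : ℕ) (p : Fin n × Fin k) :
    tailDiag n k p * tailDiag n k p = tailDiag n k p := by
  unfold tailDiag
  split_ifs <;> simp

lemma star_entVec (n k : ℕ) : star (entVec n k) = entVec n k := by
  ext p
  simp only [Pi.star_apply, entVec]
  split_ifs <;> simp

lemma entVec_dotProduct_self {n k : ℕ} (hnk : k ≤ n) : entVec n k ⬝ᵥ entVec n k = k := by
  simp only [dotProduct, entVec, Fintype.sum_prod_type_right]
  have h : ∀ a : Fin k, (∑ i : Fin n, (if i.val = a.val then (1 : ℂ) else 0) *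
      (if i.val = a.val then 1 else 0)) = 1 := by
    intro a
    rw [Finset.sum_eq_single (⟨a, a.isLt.trans_le hnk⟩ : Fin n)]
    · simp
    · intro i _ hi
      have : i.val ≠ a.val := fun h => hi (Fin.ext h)
      simp [this]
    · simp
  rw [Finset.sum_congr rfl fun a _ => h a]
  simp

lemma entMat_mul_self {n k : ℕ} (hnk : k ≤ n) :
    entMat n k * entMat n k = (k : ℂ) • entMat n k := by
  rw [entMat, star_entVec, vecMulVec_mul_vecMulVec, entVec_dotProduct_self hnk]
  ext p q
  simp [vecMulVec_apply]
  ring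

lemma tailDiag_mul_entMat (n k : ℕ) : diagonal (tailDiag n k) * entMat n k = 0 := by
  ext p q
  simp [entMat, diagonal_mul, vecMulVec_apply, ← mul_assoc, tailDiag_mul_entVec]

lemma entMat_mul_tailDiag (n k : ℕ) : entMat n k * diagonal (tailDiag n k) = 0 := by
  ext p q
  rw [entMat, star_entVec, mul_diagonal, vecMulVec_apply, mul_assoc, mul_comm (entVec n k q),
    tailDiag_mul_entVec, mul_zero, Matrix.zero_apply]

lemma isHermitian_entMat (n k : ℕ) : (entMat n k).IsHermitian :=
  (posSemidef_vecMulVec_self_star _).isHermitian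

lemma posSemidef_tailDiag (n k : ℕ) : (diagonal (tailDiag n k)).PosSemidef := by
  refine PosSemidef.diagonal fun p => ?_
  simp only [Pi.zero_apply, tailDiag]
  split_ifs <;> simp

lemma diagonal_tailDiag_mul_self (n k : ℕ) :
    diagonal (tailDiag n k) * diagonal (tailDiag n k) = diagonal (tailDiag n k) := by
  simp [diagonal_mul_diagonal, tailDiag_mul_self]

lemma isStarProjection_ent_add_tail {n k : ℕ} (hk : 0 < k) (hnk : k ≤ n) :
    IsStarProjection ((k : ℂ)⁻¹ • entMat n k + diagonal (tailDiag n k)) := by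
  have hk' : (k : ℂ) ≠ 0 := by exact_mod_cast hk.ne'
  refine ⟨?_, ?_⟩
  · rw [IsIdempotentElem]
    simp only [add_mul, mul_add, Matrix.smul_mul, Matrix.mul_smul, entMat_mul_self hnk,
      tailDiag_mul_entMat, entMat_mul_tailDiag, diagonal_tailDiag_mul_self, smul_zero, add_zero,
      zero_add]
    rw [inv_smul_smul₀ hk']
  · rw [IsSelfAdjoint, star_eq_conjTranspose, conjTranspose_add, conjTranspose_smul,
      (isHermitian_entMat n k).eq, (posSemidef_tailDiag n k).isHermitian.eq]
    simp

lemma extremalY_factor {n k : ℕ} (hk : 0 < k) :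
    extremalY n k = diagonal (fun p => (k : ℂ) ^ 2 * (1 - tailDiag n k p) + tailDiag n k p) *
      ((k : ℂ)⁻¹ • entMat n k + diagonal (tailDiag n k)) := by
  have hk' : (k : ℂ) ≠ 0 := by exact_mod_cast hk.ne'
  have h : diagonal (fun p => (k : ℂ) ^ 2 * (1 - tailDiag n k p) + tailDiag n k p) =
      (k : ℂ) ^ 2 • (1 - diagonal (tailDiag n k)) + diagonal (tailDiag n k) := by
    ext p q
    by_cases hpq : p = q
    · subst hpq; simp
    · simp [hpq]
  rw [h]
  simp only [add_mul, mul_add, sub_mul, one_mul, Matrix.smul_mul, Matrix.mul_smul,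
    tailDiag_mul_entMat, diagonal_tailDiag_mul_self, smul_zero, add_zero, sub_zero, sub_self,
    zero_add, smul_smul, extremalY]
  congr 2
  field_simp

open scoped Matrix.Norms.L2Operator in
lemma l2OpNorm_extremalY_le {n k : ℕ} (hk : 0 < k) (hnk : k ≤ n) :
    l2OpNorm (extremalY n k) ≤ (k : ℝ) ^ 2 := by
  rw [l2OpNorm_eq_norm, extremalY_factor hk]
  refine (norm_mul_le _ _).trans ?_
  have h1 : ‖(k : ℂ)⁻¹ • entMat n k + diagonal (tailDiag n k)‖ ≤ 1 :=
    (isStarProjection_ent_add_tail hk hnk).norm_le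
  have h2 : ‖(diagonal (fun p => (k : ℂ) ^ 2 * (1 - tailDiag n k p) + tailDiag n k p) :
      Matrix (Fin n × Fin k) (Fin n × Fin k) ℂ)‖ ≤ (k : ℝ) ^ 2 := by
    rw [l2_opNorm_diagonal, pi_norm_le_iff_of_nonneg (by positivity)]
    intro p
    have hk1 : (1 : ℝ) ≤ k := by exact_mod_cast hk
    unfold tailDiag
    split_ifs
    · simpa only [sub_self, mul_zero, zero_add, norm_one] using one_le_pow₀ hk1
    · simp
  simpa using mul_le_mul h2 h1 (norm_nonneg _) (by positivity)

lemma extremalY_mulVec_entVec {n k : ℕ} (hnk : k ≤ n) :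
    extremalY n k *ᵥ entVec n k = (k : ℂ) ^ 2 • entVec n k := by
  ext p
  rw [extremalY, entMat, star_entVec, add_mulVec, smul_mulVec, vecMulVec_mulVec,
    entVec_dotProduct_self hnk]
  simp [mulVec_diagonal, tailDiag_mul_entVec]
  ring

lemma le_l2OpNorm_extremalY {n k : ℕ} (hk : 0 < k) (hnk : k ≤ n) :
    (k : ℝ) ^ 2 ≤ l2OpNorm (extremalY n k) := by
  have hne : WithLp.toLp 2 (entVec n k) ≠ 0 := by
    intro h
    have h0 : entVec n k (⟨0, hk.trans_le hnk⟩, ⟨0, hk⟩) = 0 :=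
      congrArg (fun w : EuclideanSpace ℂ (Fin n × Fin k) => w (⟨0, hk.trans_le hnk⟩, ⟨0, hk⟩)) h
    simp [entVec] at h0
  have h := (toEuclideanCLM (𝕜 := ℂ) (extremalY n k)).le_opNorm (WithLp.toLp 2 (entVec n k))
  rw [toEuclideanCLM_toLp, extremalY_mulVec_entVec hnk, WithLp.toLp_smul, norm_smul] at h
  have h' := le_of_mul_le_mul_right h (norm_pos_iff.mpr hne)
  simpa [l2OpNorm] using h'

lemma posSemidef_extremalY (n k : ℕ) : (extremalY n k).PosSemidef :=
  ((posSemidef_vecMulVec_self_star _).smul (by positivity)).add (posSemidef_tailDiag n k)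

lemma partialTrace_extremalY {n k : ℕ} (i j : Fin n) :
    ∑ a : Fin k, extremalY n k (i, a) (j, a) = if i = j then (k : ℂ) else 0 := by
  simp only [extremalY, entMat, star_entVec, Matrix.add_apply, Matrix.smul_apply, vecMulVec_apply, entVec,
    smul_eq_mul, diagonal_apply, Prod.mk.injEq, and_true, tailDiag]
  by_cases hij : i = j
  · subst hij
    by_cases hi : k ≤ i.val
    · -- all `k` terms of `v v*` vanish, and each diagonal entry of `D` is `1`
      have h : ∀ a : Fin k, i.val ≠ a.val := fun a => by have := a.isLt; omega
      simp [h, hi]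
    · -- only the term `a = i` survives
      rw [Finset.sum_eq_single (⟨i, not_le.mp hi⟩ : Fin k)]
      · simp [hi]
      · intro a _ ha
        have : i.val ≠ a.val := fun h => ha (Fin.ext h.symm)
        simp [this, hi]
      · simp
  · simp only [hij, if_false]
    refine Finset.sum_eq_zero fun a _ => ?_
    by_cases hi : i.val = a.val
    · have : j.val ≠ a.val := fun h => hij (Fin.ext (hi.trans h.symm))
      simp [this]
    · simp [hi]

/-- for `n ≥ k` there is a positive semidefinite `Y` with
`(id_n ⊗ Tr_k)(Y) = k·𝟙ₙ` and `‖Y‖ = k²`. -/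
theorem exists_norm_eq_k_sq (n k : ℕ) (hn : 0 < n) (hk : 0 < k) (hnk : n ≥ k) :
    ∃ Y : Matrix (Fin n × Fin k) (Fin n × Fin k) ℂ,
      Y.PosSemidef ∧
      (∀ i j : Fin n,
        ∑ a : Fin k, Y (i, a) (j, a) = if i = j then (k : ℂ) else 0) ∧
      l2OpNorm Y = (k : ℝ) ^ 2 :=
  ⟨extremalY n k, posSemidef_extremalY n k, partialTrace_extremalY,
    (l2OpNorm_extremalY_le hk hnk).antisymm (le_l2OpNorm_extremalY hk hnk)⟩
end

section
/- Let n, k be positive integers with n ≤ k. Then there exists a positive semidefinite complex matrix Y indexed by (Fin n × Fin k) × (Fin n × Fin k) such that for all i, j : Fin n, ∑_{a : Fin k} Y (i,a) (j,a) = if i = j then k else 0, and ‖Y‖ = n·k, where ‖·‖ is the ℓ²→ℓ² operator norm. -/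
/-!
The extremal matrix is `Y = k · Ω Ω*`, where `Ω = ∑ᵢ eᵢ ⊗ eᵢ` is the unnormalised maximally
entangled vector; it exists in `ℂⁿ ⊗ ℂᵏ` because `n ≤ k`. Its partial trace is `k · 𝟙ₙ`, and since
`‖Ω‖² = n` it satisfies `Y * Y = (n k) • Y`. For a nonzero self-adjoint operator `T` with
`T² = c T` and `c ≥ 0`, the C*-identity gives `‖T‖² = ‖T* T‖ = c ‖T‖`, so `‖T‖ = c`
(`l2OpNorm_eq_of_mul_self`).
-/

open Matrix
open scoped ComplexOrder

/-- A nonzero Hermitian matrix that is `c` times a projection has operator norm `c`. -/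
lemma l2OpNorm_eq_of_mul_self {ι : Type*} [Fintype ι] [DecidableEq ι] {Y : Matrix ι ι ℂ}
    (hY : Y.IsHermitian) (h0 : Y ≠ 0) {c : ℝ} (hc : 0 ≤ c) (h : Y * Y = (c : ℂ) • Y) :
    l2OpNorm Y = c := by
  unfold l2OpNorm
  have hne : Matrix.toEuclideanCLM (𝕜 := ℂ) Y ≠ 0 := by simpa using h0
  have hstar : star (Matrix.toEuclideanCLM (𝕜 := ℂ) Y) = Matrix.toEuclideanCLM (𝕜 := ℂ) Y := by
    rw [← map_star, Matrix.star_eq_conjTranspose, hY.eq]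
  have hcstar := CStarRing.norm_star_mul_self (x := Matrix.toEuclideanCLM (𝕜 := ℂ) Y)
  rw [hstar, ← map_mul, h, map_smul, norm_smul, Complex.norm_real, Real.norm_of_nonneg hc]
    at hcstar
  exact (mul_right_cancel₀ (norm_ne_zero_iff.mpr hne) hcstar).symm

/-- The unnormalised maximally entangled vector `∑ᵢ eᵢ ⊗ eᵢ` in `ℂⁿ ⊗ ℂᵏ`, where `Fin n` is
embedded into `Fin k` as its first `n` elements. -/
def entangledVec {n k : ℕ} (hnk : n ≤ k) (p : Fin n × Fin k) : ℂ :=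
  if Fin.castLE hnk p.1 = p.2 then 1 else 0

lemma star_entangledVec {n k : ℕ} (hnk : n ≤ k) :
    star (entangledVec hnk) = entangledVec hnk := by
  ext p
  simp [entangledVec, apply_ite]

lemma entangledVec_dotProduct_self {n k : ℕ} (hnk : n ≤ k) :
    entangledVec hnk ⬝ᵥ entangledVec hnk = n := by
  simp [dotProduct, entangledVec, Fintype.sum_prod_type]

/-- for `n ≤ k` there is a positive semidefinite `Y` with
`(id_n ⊗ Tr_k)(Y) = k·𝟙ₙ` and `‖Y‖ = n·k`. -/
theorem exists_norm_eq_nk (n k : ℕ) (hn : 0 < n) (hk : 0 < k) (hnk : n ≤ k) :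
    ∃ Y : Matrix (Fin n × Fin k) (Fin n × Fin k) ℂ,
      Y.PosSemidef ∧
      (∀ i j : Fin n,
        ∑ a : Fin k, Y (i, a) (j, a) = if i = j then (k : ℂ) else 0) ∧
      l2OpNorm Y = (n : ℝ) * k := by
  have hpos : ((k : ℂ) • vecMulVec (entangledVec hnk) (entangledVec hnk)).PosSemidef := by
    have h := (posSemidef_vecMulVec_self_star (entangledVec hnk)).smul
      (Nat.cast_nonneg (α := ℂ) k)
    rwa [star_entangledVec] at h
  refine ⟨_, hpos, fun i j => ?_, ?_⟩
  · simp [vecMulVec_apply, entangledVec, eq_comm]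
  · refine l2OpNorm_eq_of_mul_self hpos.isHermitian (fun h => ?_) (by positivity) ?_
    · -- The diagonal entry of `Y` at `(0, 0)` is `k`.
      have h' := congrFun (congrFun h (⟨0, hn⟩, ⟨0, hk⟩)) (⟨0, hn⟩, ⟨0, hk⟩)
      simp [vecMulVec_apply, entangledVec] at h'
      omega
    · rw [smul_mul_smul_comm, vecMulVec_mul_vecMulVec, entangledVec_dotProduct_self]
      simp only [vecMulVec_smul, smul_smul]
      push_cast
      congr 1
      ring
end

section
/- Let n, k be positive integers with n > k. Then ϑ(S) = k², i.e. the supremum of the set {r : ℝ | there exists a positive semidefinite complex matrix Y indexed by (Fin n × Fin k) × (Fin n × Fin k) with ∑_{a : Fin k} Y (i,a) (j,a) = (if i = j then k else 0) for all i, j : Fin n and ‖Y‖ = r} equals k². -/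
/-!
The upper bound is the inequality `Y ≤ k • ((id ⊗ Tr) Y ⊗ 𝟙)`. Write `Y = Bᴴ * B`, so that `Y` is the
Gram matrix of the columns `b (i, a)` of `B` and `‖Y‖ = ‖B‖²`. Splitting a vector `v` into its `k`
pieces `v (·, a)`, Cauchy–Schwarz gives `‖B v‖² ≤ k ∑ₐ ‖∑ᵢ v (i, a) • b (i, a)‖²`. Each summand is
at most `∑ₐ' ‖∑ᵢ v (i, a) • b (i, a')‖²`, which the partial trace condition evaluates to
`k ∑ᵢ |v (i, a)|²`. Hence `‖B‖ ≤ k`.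

The bound is attained because `k ≤ n`: with `w = ∑ₐ eₐ ⊗ eₐ` the unnormalised maximally entangled
vector of `ℂᵏ ⊗ ℂᵏ ⊆ ℂⁿ ⊗ ℂᵏ` and `P` the projection onto the first `k` coordinates of `ℂⁿ`, the
matrix `k • w wᴴ + (𝟙 - P) ⊗ 𝟙` is admissible and has `w` as an eigenvector of eigenvalue `k²`.
-/

open Matrix
open scoped ComplexOrder

/-- If the Gram matrix of the family `b` has partial trace `k • 𝟙`, then the synthesis map
`v ↦ ∑ v p • b p` has norm at most `k`. -/
lemma norm_sq_synthesis_le {E : Type*} [NormedAddCommGroup E] [InnerProductSpace ℂ E] {n k : ℕ}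
    (b : Fin n × Fin k → E)
    (hb : ∀ i j : Fin n,
      ∑ a : Fin k, inner ℂ (b (i, a)) (b (j, a)) = if i = j then (k : ℂ) else 0)
    (v : Fin n × Fin k → ℂ) :
    ‖∑ p, v p • b p‖ ^ 2 ≤ (k : ℝ) ^ 2 * ∑ p, ‖v p‖ ^ 2 := by
  have key : ∀ c : Fin n → ℂ,
      ∑ a : Fin k, ‖∑ i, c i • b (i, a)‖ ^ 2 = k * ∑ i, ‖c i‖ ^ 2 := by
    intro c
    have h : ∑ a : Fin k, inner ℂ (∑ i, c i • b (i, a)) (∑ i, c i • b (i, a))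
        = (k : ℂ) * ∑ i, (‖c i‖ : ℂ) ^ 2 := by
      simp only [sum_inner, inner_sum, inner_smul_left, inner_smul_right]
      rw [Finset.sum_comm, Finset.mul_sum]
      refine Finset.sum_congr rfl fun i _ => ?_
      simp only [← Finset.mul_sum]
      rw [Finset.sum_comm]
      simp only [← Finset.mul_sum, hb]
      simp only [mul_ite, mul_zero, Finset.sum_ite_eq', Finset.mem_univ, if_true]
      rw [← Complex.conj_mul']
      ring
    simp only [inner_self_eq_norm_sq_to_K, Complex.coe_algebraMap] at h
    exact_mod_cast h
  have split : ∑ p, v p • b p = ∑ a : Fin k, ∑ i, v (i, a) • b (i, a) := by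
    rw [Fintype.sum_prod_type, Finset.sum_comm]
  calc ‖∑ p, v p • b p‖ ^ 2
      ≤ (∑ a : Fin k, ‖∑ i, v (i, a) • b (i, a)‖) ^ 2 := by
        rw [split]; gcongr; exact norm_sum_le _ _
    _ ≤ k * ∑ a : Fin k, ‖∑ i, v (i, a) • b (i, a)‖ ^ 2 := by
        simpa using sq_sum_le_card_mul_sum_sq (s := (Finset.univ : Finset (Fin k)))
          (f := fun a => ‖∑ i, v (i, a) • b (i, a)‖)
    _ ≤ k * ∑ a : Fin k, (k * ∑ i, ‖v (i, a)‖ ^ 2) := by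
        gcongr with a
        rw [← key fun i => v (i, a)]
        exact Finset.single_le_sum (f := fun a' => ‖∑ i, v (i, a) • b (i, a')‖ ^ 2)
          (fun _ _ => by positivity) (Finset.mem_univ a)
    _ = (k : ℝ) ^ 2 * ∑ p, ‖v p‖ ^ 2 := by
        rw [← Finset.mul_sum, Fintype.sum_prod_type, Finset.sum_comm]; ring

-- The Loewner order makes `Y = Bᴴ * B` available from the C⋆-algebraic characterisation of `0 ≤ Y`.
open scoped MatrixOrder in
lemma l2OpNorm_le_sq {n k : ℕ} {Y : Matrix (Fin n × Fin k) (Fin n × Fin k) ℂ}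
    (hY : Y.PosSemidef)
    (htr : ∀ i j : Fin n, ∑ a : Fin k, Y (i, a) (j, a) = if i = j then (k : ℂ) else 0) :
    l2OpNorm Y ≤ (k : ℝ) ^ 2 := by
  obtain ⟨B, rfl⟩ : ∃ B : Matrix (Fin n × Fin k) (Fin n × Fin k) ℂ, Y = Bᴴ * B :=
    CStarAlgebra.nonneg_iff_eq_star_mul_self.mp hY.nonneg
  have hB : ‖Matrix.toEuclideanCLM (𝕜 := ℂ) B‖ ≤ k := by
    refine ContinuousLinearMap.opNorm_le_bound _ (by positivity) fun v => ?_
    refine le_of_sq_le_sq ?_ (by positivity)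
    have h := norm_sq_synthesis_le
      (fun p => (WithLp.toLp 2 (fun q => B q p) : EuclideanSpace ℂ (Fin n × Fin k)))
      (by
        intro i j
        rw [← htr i j]
        refine Finset.sum_congr rfl fun a _ => ?_
        simp [PiLp.inner_apply, Matrix.mul_apply, mul_comm]) v
    have hv : Matrix.toEuclideanCLM (𝕜 := ℂ) B v
        = ∑ p, v p • (WithLp.toLp 2 (fun q => B q p) : EuclideanSpace ℂ (Fin n × Fin k)) := by
      ext q
      simp [Matrix.mulVec, dotProduct, mul_comm]
    rw [hv, mul_pow, EuclideanSpace.norm_sq_eq v]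
    exact h
  have hstar : Matrix.toEuclideanCLM (𝕜 := ℂ) (Bᴴ * B)
      = star (Matrix.toEuclideanCLM (𝕜 := ℂ) B) * Matrix.toEuclideanCLM (𝕜 := ℂ) B := by
    rw [← map_star, ← map_mul]; rfl
  rw [l2OpNorm, hstar, ContinuousLinearMap.star_eq_adjoint, ContinuousLinearMap.mul_def,
    ContinuousLinearMap.norm_adjoint_comp_self, ← sq]
  gcongr

/-- The unnormalised maximally entangled vector `∑ₐ eₐ ⊗ eₐ`. -/
def maxEnt (n k : ℕ) : Fin n × Fin k → ℂ := fun p => if (p.1 : ℕ) = p.2 then 1 else 0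

/-- The matrix `k • w wᴴ + (𝟙 - P) ⊗ 𝟙`, where `w = maxEnt n k` and `P` projects onto the first `k`
coordinates of `ℂⁿ`. -/
noncomputable def extremal (n k : ℕ) : Matrix (Fin n × Fin k) (Fin n × Fin k) ℂ :=
  (k : ℂ) • vecMulVec (maxEnt n k) (star (maxEnt n k)) +
    diagonal fun p => if (p.1 : ℕ) < k then 0 else 1

lemma extremal_posSemidef (n k : ℕ) : (extremal n k).PosSemidef := by
  refine ((posSemidef_vecMulVec_self_star _).smul (by positivity)).add
    (PosSemidef.diagonal fun p => ?_)
  dsimp only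
  split_ifs <;> simp

lemma extremal_partialTrace (n k : ℕ) (i j : Fin n) :
    ∑ a : Fin k, extremal n k (i, a) (j, a) = if i = j then (k : ℂ) else 0 := by
  simp only [extremal, maxEnt, Matrix.add_apply, Matrix.smul_apply, vecMulVec_apply,
    diagonal_apply, Pi.star_apply, Finset.sum_add_distrib, Prod.mk.injEq, and_true, smul_eq_mul]
  by_cases hij : i = j
  · subst hij
    by_cases hi : (i : ℕ) < k
    · have h : ∀ a : Fin k, ((i : ℕ) = a) ↔ (⟨i, hi⟩ : Fin k) = a := fun a => by
        rw [Fin.ext_iff]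
      simp [hi, h]
    · have h : ∀ a : Fin k, ¬ (i : ℕ) = a := fun a => by have := a.2; omega
      simp [hi, h]
  · have h : ∀ a : Fin k, (i : ℕ) = a → ¬ (j : ℕ) = a := fun a h1 h2 =>
      hij (Fin.ext (h1.trans h2.symm))
    simp only [hij, if_false, Finset.sum_const_zero, add_zero]
    refine Finset.sum_eq_zero fun a _ => ?_
    by_cases h1 : (i : ℕ) = a
    · simp [h a h1]
    · simp [h1]

lemma star_maxEnt_dotProduct {n k : ℕ} (hnk : k ≤ n) :
    star (maxEnt n k) ⬝ᵥ maxEnt n k = k := by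
  have h : ∀ (x : Fin n) (a : Fin k), ((x : ℕ) = a) ↔ x = Fin.castLE hnk a := fun x a => by
    simp [Fin.ext_iff]
  simp only [dotProduct, Fintype.sum_prod_type, Pi.star_apply, maxEnt]
  rw [Finset.sum_comm]
  simp [h]

lemma extremal_mulVec {n k : ℕ} (hnk : k ≤ n) :
    extremal n k *ᵥ maxEnt n k = ((k : ℂ) ^ 2) • maxEnt n k := by
  have hd : (diagonal fun p : Fin n × Fin k => if (p.1 : ℕ) < k then (0 : ℂ) else 1) *ᵥ
      maxEnt n k = 0 := by
    ext p
    have := p.2.2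
    rw [mulVec_diagonal]
    by_cases h : (p.1 : ℕ) = p.2
    · simp [show (p.1 : ℕ) < k by omega]
    · simp [maxEnt, h]
  rw [extremal, add_mulVec, hd, add_zero, smul_mulVec, vecMulVec_mulVec,
    star_maxEnt_dotProduct hnk]
  ext p
  simp
  ring

lemma sq_le_l2OpNorm_extremal {n k : ℕ} (hk : 0 < k) (hnk : k ≤ n) :
    (k : ℝ) ^ 2 ≤ l2OpNorm (extremal n k) := by
  set w : EuclideanSpace ℂ (Fin n × Fin k) := WithLp.toLp 2 (maxEnt n k) with hw
  have hw0 : w ≠ 0 := by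
    intro h
    have := congrArg (fun u : EuclideanSpace ℂ (Fin n × Fin k) => u (⟨0, by omega⟩, ⟨0, hk⟩)) h
    simp [hw, maxEnt] at this
  have hmul : Matrix.toEuclideanCLM (𝕜 := ℂ) (extremal n k) w = ((k : ℂ) ^ 2) • w := by
    ext p
    have := congrFun (extremal_mulVec hnk) p
    simpa [hw] using this
  have h := (Matrix.toEuclideanCLM (𝕜 := ℂ) (extremal n k)).le_opNorm w
  rw [hmul, norm_smul, norm_pow, Complex.norm_natCast] at h
  exact le_of_mul_le_mul_right h (norm_pos_iff.2 hw0)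

/-- for `n > k` the Lovász function of `S = B(ℂⁿ) ⊗ 𝟙ₖ` equals `k²`. -/
theorem lovasz_eq_k_sq (n k : ℕ) (hn : 0 < n) (hk : 0 < k) (hnk : n > k) :
    sSup {r : ℝ | ∃ Y : Matrix (Fin n × Fin k) (Fin n × Fin k) ℂ,
      Y.PosSemidef ∧
      (∀ i j : Fin n,
        ∑ a : Fin k, Y (i, a) (j, a) = if i = j then (k : ℂ) else 0) ∧
      l2OpNorm Y = r} = (k : ℝ) ^ 2 := by
  refine IsGreatest.csSup_eq ⟨⟨extremal n k, extremal_posSemidef n k, extremal_partialTrace n k,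
    le_antisymm (l2OpNorm_le_sq (extremal_posSemidef n k) (extremal_partialTrace n k))
      (sq_le_l2OpNorm_extremal hk hnk.le)⟩, ?_⟩
  rintro r ⟨Y, hY, htr, rfl⟩
  exact l2OpNorm_le_sq hY htr
end

section
/- Let n, k be positive integers with n ≤ k. Then ϑ(S) = n·k, i.e. the supremum of the set {r : ℝ | there exists a positive semidefinite complex matrix Y indexed by (Fin n × Fin k) × (Fin n × Fin k) with ∑_{a : Fin k} Y (i,a) (j,a) = (if i = j then k else 0) for all i, j : Fin n and ‖Y‖ = r} equals n·k. -/
/-!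
For positive semidefinite `Y = Bᴴ * B` the C⋆-identity and the bound of the operator norm by the
Hilbert–Schmidt norm give `‖Y‖ = ‖B‖² ≤ Tr (Bᴴ * B) = Tr Y`, and the partial trace condition fixes
`Tr Y = n * k`. When `n ≤ k`, the bound is attained by `Y = k • Ω Ωᴴ` with the unnormalised
maximally entangled vector `Ω = ∑ i, eᵢ ⊗ eᵢ`: its partial trace is `k • 1`, and `Y Ω = (k * n) • Ω`.
-/

open Matrix
open scoped ComplexOrder

/-- The operator norm is at most the Hilbert–Schmidt norm: Cauchy–Schwarz applied to each row. -/
theorem l2OpNorm_sq_le_sum {ι : Type*} [Fintype ι] [DecidableEq ι] (B : Matrix ι ι ℂ) :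
    l2OpNorm B ^ 2 ≤ ∑ p, ∑ q, ‖B p q‖ ^ 2 := by
  have hS : 0 ≤ ∑ p, ∑ q, ‖B p q‖ ^ 2 := by positivity
  have h : l2OpNorm B ≤ Real.sqrt (∑ p, ∑ q, ‖B p q‖ ^ 2) := by
    refine ContinuousLinearMap.opNorm_le_bound _ (Real.sqrt_nonneg _) fun x => ?_
    rw [EuclideanSpace.norm_eq, EuclideanSpace.norm_eq x, ← Real.sqrt_mul hS]
    apply Real.sqrt_le_sqrt
    rw [Finset.sum_mul]
    refine Finset.sum_le_sum fun p _ => ?_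
    have h1 : ‖(Matrix.toEuclideanCLM (𝕜 := ℂ) B x) p‖ ≤ ∑ q, ‖B p q‖ * ‖x q‖ := by
      rw [Matrix.ofLp_toEuclideanCLM, Matrix.mulVec, dotProduct]
      refine (norm_sum_le _ _).trans (le_of_eq ?_)
      simp
    calc _ ≤ (∑ q, ‖B p q‖ * ‖x q‖) ^ 2 := by gcongr
      _ ≤ _ := Finset.sum_mul_sq_le_sq_mul_sq _ _ _
  calc l2OpNorm B ^ 2 ≤ Real.sqrt (∑ p, ∑ q, ‖B p q‖ ^ 2) ^ 2 := by
        gcongr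
        exact norm_nonneg _
    _ = _ := Real.sq_sqrt hS

open scoped MatrixOrder in
theorem l2OpNorm_le_trace_s13 {ι : Type*} [Fintype ι] [DecidableEq ι] {Y : Matrix ι ι ℂ}
    (hY : Y.PosSemidef) : l2OpNorm Y ≤ Y.trace.re := by
  obtain ⟨B, rfl⟩ : ∃ B : Matrix ι ι ℂ, Y = Bᴴ * B :=
    CStarAlgebra.nonneg_iff_eq_star_mul_self.mp hY.nonneg
  have h1 : l2OpNorm (Bᴴ * B) = l2OpNorm B ^ 2 := by
    unfold l2OpNorm
    rw [map_mul, ← Matrix.star_eq_conjTranspose, map_star, sq]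
    exact CStarRing.norm_star_mul_self
  have h2 : (Bᴴ * B).trace.re = ∑ p, ∑ q, ‖B p q‖ ^ 2 := by
    rw [Finset.sum_comm]
    simp only [Matrix.trace, Matrix.diag, Matrix.mul_apply, Matrix.conjTranspose_apply,
      Complex.re_sum]
    refine Finset.sum_congr rfl fun q _ => Finset.sum_congr rfl fun p _ => ?_
    rw [← Complex.normSq_eq_norm_sq, Complex.normSq_apply]
    simp
  rw [h1, h2]
  exact l2OpNorm_sq_le_sum B

/-- An eigenvalue bounds the operator norm from below. -/
theorem le_l2OpNorm_of_mulVec {ι : Type*} [Fintype ι] [DecidableEq ι] {Y : Matrix ι ι ℂ}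
    {v : ι → ℂ} (hv : v ≠ 0) {c : ℝ} (hc : 0 ≤ c) (h : Y *ᵥ v = (c : ℂ) • v) :
    c ≤ l2OpNorm Y := by
  have h1 := (Matrix.toEuclideanCLM (𝕜 := ℂ) Y).le_opNorm (WithLp.toLp 2 v)
  rw [Matrix.toEuclideanCLM_toLp, h, WithLp.toLp_smul, norm_smul, Complex.norm_real,
    Real.norm_of_nonneg hc] at h1
  refine le_of_mul_le_mul_right h1 (norm_pos_iff.mpr ?_)
  simpa using hv

/-- The unnormalised maximally entangled vector `∑ i, eᵢ ⊗ eᵢ` in `ℂⁿ ⊗ ℂᵏ`, where `Fin n` is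
embedded in `Fin k` by `Fin.castLE`. -/
def maxEntangled {n k : ℕ} (hnk : n ≤ k) : Fin n × Fin k → ℂ :=
  fun p => if p.2 = Fin.castLE hnk p.1 then 1 else 0

/-- for `n ≤ k` the Lovász function of `S = B(ℂⁿ) ⊗ 𝟙ₖ` equals `n·k`. -/
theorem lovasz_eq_nk (n k : ℕ) (hn : 0 < n) (hk : 0 < k) (hnk : n ≤ k) :
    sSup {r : ℝ | ∃ Y : Matrix (Fin n × Fin k) (Fin n × Fin k) ℂ,
      Y.PosSemidef ∧
      (∀ i j : Fin n,
        ∑ a : Fin k, Y (i, a) (j, a) = if i = j then (k : ℂ) else 0) ∧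
      l2OpNorm Y = r} = (n : ℝ) * k := by
  have upper : ∀ Y : Matrix (Fin n × Fin k) (Fin n × Fin k) ℂ, Y.PosSemidef →
      (∀ i j : Fin n, ∑ a : Fin k, Y (i, a) (j, a) = if i = j then (k : ℂ) else 0) →
      l2OpNorm Y ≤ (n : ℝ) * k := by
    intro Y hY hT
    have ht : Y.trace = ((n * k : ℝ) : ℂ) := by
      simp [Matrix.trace, Fintype.sum_prod_type, hT]
    have := l2OpNorm_le_trace_s13 hY
    rwa [ht, Complex.ofReal_re] at this
  refine IsGreatest.csSup_eq ⟨?_, ?_⟩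
  · set v := maxEntangled hnk with hvdef
    have hstar : star v = v := by
      ext p
      simp only [hvdef, maxEntangled, Pi.star_apply]
      split_ifs <;> simp
    have hpsd : ((k : ℂ) • Matrix.vecMulVec v v).PosSemidef := by
      have := Matrix.posSemidef_vecMulVec_self_star v
      rw [hstar] at this
      exact this.smul (Nat.cast_nonneg k)
    have hpt : ∀ i j : Fin n, ∑ a : Fin k, ((k : ℂ) • Matrix.vecMulVec v v) (i, a) (j, a) =
        if i = j then (k : ℂ) else 0 := by
      intro i j
      simp [hvdef, maxEntangled, Matrix.vecMulVec_apply, eq_comm]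
    have hvv : v ⬝ᵥ v = n := by
      simp [hvdef, maxEntangled, dotProduct, Fintype.sum_prod_type]
    have hv0 : v ≠ 0 := by
      intro h
      rw [h, zero_dotProduct] at hvv
      exact hn.ne (by exact_mod_cast hvv)
    refine ⟨_, hpsd, hpt, le_antisymm (upper _ hpsd hpt) ?_⟩
    refine le_l2OpNorm_of_mulVec hv0 (by positivity) ?_
    ext p
    simp [Matrix.smul_mulVec, Matrix.vecMulVec_mulVec, hvv]
    ring
  · rintro r ⟨Y, hY, hT, rfl⟩
    exact upper Y hY hT
end
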